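/- Let R be a two-dimensional regular local ring with maximal ideal m, and let M = ⊕{R/J : J a GV-ideal of R}. Then M is GV-torsion (hence w-projective) but M is not w-split. -/

import Mathlib

open CategoryTheory

universe u

section Defs
variable (R : Type u) [CommRing R]

/-- `J` is a Glaz–Vasconcelos ideal (GV-ideal): finitely generated and the natural map
`R → Hom_R(J, R)`, `r ↦ (x ↦ r•x)`, is an isomorphism. -/
def IsGVIdeal (J : Ideal R) : Prop :=
  J.FG ∧ Function.Bijective fun r : R =>
    ((LinearMap.lsmul R R r).comp J.subtype : J →ₗ[R] R)

variable (M : Type u) [AddCommGroup M] [Module R M]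

/-- `M` is GV-torsion: every element is killed by some GV-ideal. -/
def IsGVTorsion : Prop :=
  ∀ x : M, ∃ J : Ideal R, IsGVIdeal R J ∧ ∀ a ∈ J, a • x = 0

/-- `M` is GV-torsionfree: no nonzero element is killed by a GV-ideal. -/
def IsGVTorsionFree : Prop :=
  ∀ x : M, (∃ J : Ideal R, IsGVIdeal R J ∧ ∀ a ∈ J, a • x = 0) → x = 0

/-- The w-splitting condition on the epimorphism `g` of a short exact sequence:
there are a GV-ideal `⟨d₁,…,dₙ⟩` and maps `hₖ` with `g ∘ hₖ = (dₖ•·)`. -/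
def IsWSplitSeq {B C : Type u} [AddCommGroup B] [Module R B] [AddCommGroup C] [Module R C]
    (g : B →ₗ[R] C) : Prop :=
  ∃ (n : ℕ) (d : Fin n → R), IsGVIdeal R (Ideal.span (Set.range d)) ∧
    ∃ h : Fin n → (C →ₗ[R] B), ∀ k, ∀ c : C, g (h k c) = d k • c

/-- `M` is a w-split module: some short exact sequence `0 → K → P → M → 0` with
`P` projective is w-split. -/
def IsWSplitModule : Prop :=
  ∃ (P : Type u) (_ : AddCommGroup P) (_ : Module R P), Module.Projective R P ∧
    ∃ g : P →ₗ[R] M, Function.Surjective g ∧ IsWSplitSeq R g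

/-- The Ext group `Ext^n_R(M, N)` as an object of `ModuleCat R`. -/
noncomputable def extMod (n : ℕ) (N : Type u) [AddCommGroup N] [Module R N] : ModuleCat.{u} R :=
  ((Ext R (ModuleCat.{u} R) n).obj (Opposite.op (ModuleCat.of R M))).obj (ModuleCat.of R N)

/-- `M` is a w-module: GV-torsionfree and `Ext¹_R(R/J, M) = 0` for all GV-ideals `J`. -/
def IsWModule : Prop :=
  IsGVTorsionFree R M ∧
    ∀ J : Ideal R, IsGVIdeal R J → Subsingleton (extMod R (R ⧸ J) 1 M)

/-- `ι : M →ₗ E` exhibits `E` as a w-envelope `M_w` of the GV-torsionfree module `M`: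
`E` is a w-module containing `M` with GV-torsion quotient `E/M`. -/
def IsWEnvelope (E : Type u) [AddCommGroup E] [Module R E] (ι : M →ₗ[R] E) : Prop :=
  Function.Injective ι ∧ IsWModule R E ∧ IsGVTorsion R (E ⧸ LinearMap.range ι)

/-- `M` is w-projective: `Ext¹_R(L(M), N)` is GV-torsion for every GV-torsionfree
w-module `N`, where `L(M) = (M/tor_GV(M))_w`. -/
def IsWProjective : Prop :=
  ∀ (T : Submodule R M),
    (∀ x : M, x ∈ T ↔ ∃ J : Ideal R, IsGVIdeal R J ∧ ∀ a ∈ J, a • x = 0) →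
    ∀ (L : Type u) (_ : AddCommGroup L) (_ : Module R L) (ι : (M ⧸ T) →ₗ[R] L),
      IsWEnvelope R (M ⧸ T) L ι →
      ∀ (N : Type u) (_ : AddCommGroup N) (_ : Module R N),
        IsGVTorsionFree R N → IsWModule R N → IsGVTorsion R (extMod R L 1 N)

/-- `I` is a w-ideal: `I_w = I`, i.e. any `x` with `Jx ⊆ I` for some GV-ideal `J`
already lies in `I`. -/
def IsWIdeal (I : Ideal R) : Prop :=
  ∀ x : R, (∃ J : Ideal R, IsGVIdeal R J ∧ ∀ a ∈ J, a * x ∈ I) → x ∈ I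

/-- `I` is a maximal w-ideal: maximal among proper w-ideals of `R`. -/
def IsMaximalWIdeal (I : Ideal R) : Prop :=
  I ≠ ⊤ ∧ IsWIdeal R I ∧ ∀ I' : Ideal R, IsWIdeal R I' → I' ≠ ⊤ → I ≤ I' → I = I'

end Defs

/-! A map from a GV-torsion module to a projective module vanishes, so a GV-torsion module is
w-split exactly when a single GV-ideal annihilates it. The annihilator of `⨁ R/J` is the
intersection of all GV-ideals. If one GV-ideal `I` satisfies `⨅ Iⁿ = 0`, this intersection is zero,
because products of GV-ideals are GV-ideals, and the zero ideal of a nontrivial ring is not GV.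

An ideal containing a weakly regular sequence of length two is GV once it is finitely generated.
In a regular local ring of dimension at least two, such a sequence consists of a prime element `x`
of the maximal ideal and an element of the maximal ideal outside `(x)`. The element `x` comes from
the proof that regular local rings are domains: prime avoidance yields `x` outside all minimal
primes with `R/(x)` regular, by induction `(x)` is prime, and Nakayama kills the minimal prime
below `(x)`. -/

section GVIdeal

variable {R : Type u} [CommRing R] {I J : Ideal R}

open RingTheory.Sequence
open scoped Pointwise

/-- The natural isomorphism `R ≃ Hom_R(J, R)`, `r ↦ (a ↦ r * a)`, of a GV-ideal `J`, for rewriting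
iterated duals such as `Hom_R(I, Hom_R(J, R))`. -/
noncomputable def IsGVIdeal.homEquiv (hJ : IsGVIdeal R J) : R ≃ₗ[R] (J →ₗ[R] R) :=
  LinearEquiv.ofBijective ((LinearMap.lsmul R R).domRestrict₂ J) hJ.2

-- A map `f : J → R` is multiplication by `f x / x`, which lies in `R` because `y * f x = x * f y`
-- and `y` is regular modulo `x`.
theorem isGVIdeal_of_isWeaklyRegular (hJ : J.FG) {x y : R} (hx : x ∈ J) (hy : y ∈ J)
    (hxy : IsWeaklyRegular R [x, y]) : IsGVIdeal R J := by
  simp only [isWeaklyRegular_cons_iff, IsWeaklyRegular.nil, and_true] at hxy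
  obtain ⟨hx_reg, hy_reg⟩ := hxy
  refine ⟨hJ, fun r s hrs => hx_reg ?_, fun f => ?_⟩
  · have hrs_x : r * x = s * x := LinearMap.congr_fun hrs ⟨x, hx⟩
    simpa only [smul_eq_mul, mul_comm x] using hrs_x
  · have mul_comm_apply (a b : J) : (a : R) * f b = b * f a := by
      simp only [← smul_eq_mul, ← map_smul]
      congr 1
      exact Subtype.ext (mul_comm _ _)
    obtain ⟨r, -, hr : x * r = f ⟨x, hx⟩⟩ : f ⟨x, hx⟩ ∈ x • (⊤ : Ideal R) := by
      refine mem_of_isSMulRegular_quotient_of_smul_mem hy_reg ?_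
      rw [smul_eq_mul, mul_comm_apply ⟨y, hy⟩ ⟨x, hx⟩]
      exact Submodule.smul_mem_pointwise_smul _ _ _ trivial
    refine ⟨r, LinearMap.ext fun a => hx_reg ?_⟩
    calc x * (r * a) = a * f ⟨x, hx⟩ := by rw [← hr]; ring
      _ = x * f a := mul_comm_apply a ⟨x, hx⟩

theorem isGVIdeal_top : IsGVIdeal R (⊤ : Ideal R) :=
  isGVIdeal_of_isWeaklyRegular Module.Finite.fg_top (x := 1) (y := 1) trivial trivial
    (.cons (.one _) (.cons (.one _) (.nil R _)))

-- `Hom(I * J, R)` embeds into `Hom(I, Hom(J, R))`, which is `R` by applying the hypotheses twice.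
theorem IsGVIdeal.mul (hI : IsGVIdeal R I) (hJ : IsGVIdeal R J) : IsGVIdeal R (I * J) := by
  let curry : (↥(I * J) →ₗ[R] R) → (I →ₗ[R] J →ₗ[R] R) := fun f =>
    TensorProduct.curry (f ∘ₗ Submodule.mulMap' I J)
  have curry_injective : Function.Injective curry := fun f g hfg =>
    LinearMap.cancel_right (Submodule.mulMap'_surjective I J) |>.1
      (TensorProduct.curry_injective hfg)
  have curry_bijective : Function.Bijective
      (curry ∘ fun r : R => (LinearMap.lsmul R R r).comp (I * J).subtype) := by
    convert (hI.homEquiv.trans (hJ.homEquiv.congrRight)).bijective using 1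
    ext r a b
    exact (mul_assoc r a b).symm
  exact ⟨hI.1.mul hJ.1, curry_bijective.1.of_comp,
    curry_bijective.2.of_comp_left curry_injective⟩

theorem IsGVIdeal.pow (hI : IsGVIdeal R I) (n : ℕ) : IsGVIdeal R (I ^ n) := by
  induction n with
  | zero => simpa only [pow_zero, Ideal.one_eq_top] using isGVIdeal_top
  | succ n ih => exact pow_succ I n ▸ ih.mul hI

theorem isGVTorsionFree_self : IsGVTorsionFree R R := by
  rintro r ⟨J, hJ, hr⟩
  exact hJ.2.1 (LinearMap.ext fun a => by simpa [mul_comm] using hr a a.2)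

theorem IsGVIdeal.ne_bot [Nontrivial R] (hJ : IsGVIdeal R J) : J ≠ ⊥ := by
  rintro rfl
  exact one_ne_zero (isGVTorsionFree_self 1 ⟨⊥, hJ, by simp⟩)

end GVIdeal

section GVTorsion

variable {R : Type u} [CommRing R]
variable {M : Type u} [AddCommGroup M] [Module R M] {N : Type u} [AddCommGroup N] [Module R N]

theorem IsGVIdeal.isGVTorsion_of_le_annihilator {J : Ideal R} (hJ : IsGVIdeal R J)
    (hJM : J ≤ Module.annihilator R M) : IsGVTorsion R M :=
  fun x => ⟨J, hJ, fun _ ha => Module.mem_annihilator.1 (hJM ha) x⟩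

theorem isGVTorsion_of_subsingleton [Subsingleton M] : IsGVTorsion R M :=
  isGVIdeal_top.isGVTorsion_of_le_annihilator (Module.annihilator_eq_top_iff.2 ‹_›).ge

theorem IsGVTorsion.directSum {ι : Type u} {M : ι → Type u} [∀ i, AddCommGroup (M i)]
    [∀ i, Module R (M i)] (hM : ∀ i, IsGVTorsion R (M i)) :
    IsGVTorsion R (DirectSum ι M) := by
  classical
  intro x
  induction x using DirectSum.induction_on with
  | zero => exact ⟨⊤, isGVIdeal_top, fun _ _ => smul_zero _⟩
  | of i x =>
    obtain ⟨J, hJ, hJx⟩ := hM i x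
    exact ⟨J, hJ, fun a ha => by rw [← DirectSum.lof_eq_of R, ← map_smul, hJx a ha, map_zero]⟩
  | add x y hx hy =>
    obtain ⟨I, hI, hIx⟩ := hx
    obtain ⟨J, hJ, hJy⟩ := hy
    refine ⟨I * J, hI.mul hJ, fun a ha => ?_⟩
    rw [smul_add, hIx a (Ideal.mul_le_left ha), hJy a (Ideal.mul_le_right ha), add_zero]

theorem IsGVIdeal.isGVTorsion_quotient {J : Ideal R} (hJ : IsGVIdeal R J) :
    IsGVTorsion R (R ⧸ J) :=
  hJ.isGVTorsion_of_le_annihilator Ideal.annihilator_quotient.ge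

theorem isGVTorsion_directSum_quotient :
    IsGVTorsion R (DirectSum {J : Ideal R // IsGVIdeal R J} fun J => R ⧸ J.1) :=
  .directSum fun J => J.2.isGVTorsion_quotient

theorem IsGVTorsion.linearMap_eq_zero (hM : IsGVTorsion R M) (hN : IsGVTorsionFree R N)
    (f : M →ₗ[R] N) : f = 0 := by
  ext x
  obtain ⟨J, hJ, hJx⟩ := hM x
  exact hN _ ⟨J, hJ, fun a ha => by rw [← map_smul, hJx a ha, map_zero]⟩

theorem isGVTorsionFree_of_projective [Module.Projective R M] : IsGVTorsionFree R M := by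
  rintro x ⟨J, hJ, hJx⟩
  obtain ⟨s, hs⟩ := Module.Projective.out (R := R) (P := M)
  refine hs.injective (Finsupp.ext fun p => ?_)
  rw [map_zero]
  refine isGVTorsionFree_self _ ⟨J, hJ, fun a ha => ?_⟩
  rw [← Finsupp.smul_apply, ← map_smul, hJx a ha, map_zero, Finsupp.zero_apply]

theorem IsWEnvelope.subsingleton [Subsingleton M] {ι : M →ₗ[R] N} (hι : IsWEnvelope R M N ι) :
    Subsingleton N := by
  obtain ⟨-, ⟨hN, -⟩, hN_tors⟩ := hι
  refine subsingleton_of_forall_eq 0 fun x => hN x ?_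
  obtain ⟨J, hJ, hJx⟩ := hN_tors (Submodule.Quotient.mk x)
  refine ⟨J, hJ, fun a ha => ?_⟩
  obtain ⟨z, hz : ι z = a • x⟩ := (Submodule.Quotient.mk_eq_zero _).1 (hJx a ha)
  rw [← hz, Subsingleton.elim z 0, map_zero]

theorem subsingleton_extMod_succ [Subsingleton M] (n : ℕ) :
    Subsingleton (extMod R M (n + 1) N) :=
  have : Projective (ModuleCat.of R M) := (ModuleCat.isZero_of_subsingleton _).projective
  ModuleCat.subsingleton_of_isZero (isZero_Ext_succ_of_projective _ _ n)

theorem IsGVTorsion.isWProjective (hM : IsGVTorsion R M) : IsWProjective R M := by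
  intro T hT L _ _ ι hι N _ _ _ _
  obtain rfl : T = ⊤ := eq_top_iff.2 fun x _ => (hT x).2 (hM x)
  have : Subsingleton L := hι.subsingleton
  have : Subsingleton (extMod R L 1 N) := subsingleton_extMod_succ 0
  exact isGVTorsion_of_subsingleton

theorem IsGVIdeal.isWSplitModule_of_le_annihilator {J : Ideal R} (hJ : IsGVIdeal R J)
    (hJM : J ≤ Module.annihilator R M) : IsWSplitModule R M := by
  obtain ⟨n, d, rfl⟩ := Submodule.fg_iff_exists_fin_generating_family.1 hJ.1
  refine ⟨M →₀ R, inferInstance, inferInstance, inferInstance,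
    Finsupp.linearCombination R id, Finsupp.linearCombination_id_surjective R M, n, d, hJ, 0,
    fun k c => ?_⟩
  have hdk : d k • c = 0 :=
    Module.mem_annihilator.1 (hJM (Submodule.subset_span (Set.mem_range_self k))) c
  rw [hdk, Pi.zero_apply, LinearMap.zero_apply, map_zero]

theorem IsGVTorsion.exists_isGVIdeal_le_annihilator (hM : IsGVTorsion R M)
    (hsplit : IsWSplitModule R M) :
    ∃ J : Ideal R, IsGVIdeal R J ∧ J ≤ Module.annihilator R M := by
  obtain ⟨P, _, _, _, g, -, n, d, hd, h, hgh⟩ := hsplit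
  refine ⟨_, hd, Ideal.span_le.2 ?_⟩
  rintro _ ⟨k, rfl⟩
  have hk : h k = 0 := hM.linearMap_eq_zero isGVTorsionFree_of_projective (h k)
  exact Module.mem_annihilator.2 fun c => by rw [← hgh, hk, LinearMap.zero_apply, map_zero]

theorem IsGVTorsion.isWSplitModule_iff (hM : IsGVTorsion R M) :
    IsWSplitModule R M ↔ ∃ J : Ideal R, IsGVIdeal R J ∧ J ≤ Module.annihilator R M :=
  ⟨hM.exists_isGVIdeal_le_annihilator, fun ⟨_, hJ, hJM⟩ => hJ.isWSplitModule_of_le_annihilator hJM⟩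

theorem annihilator_directSum_quotient {ι : Type*} (I : ι → Ideal R) :
    Module.annihilator R (DirectSum ι fun i => R ⧸ I i) = ⨅ i, I i := by
  simp only [DirectSum, Module.annihilator_dfinsupp, Ideal.annihilator_quotient]

theorem isWSplitModule_directSum_quotient_iff :
    IsWSplitModule R (DirectSum {J : Ideal R // IsGVIdeal R J} fun J => R ⧸ J.1) ↔
      IsGVIdeal R (⨅ J : {J : Ideal R // IsGVIdeal R J}, J.1) := by
  rw [isGVTorsion_directSum_quotient.isWSplitModule_iff, annihilator_directSum_quotient]
  refine ⟨fun ⟨J, hJ, hle⟩ => ?_, fun h => ⟨_, h, le_rfl⟩⟩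
  exact hle.antisymm (iInf_le (fun J : {J // IsGVIdeal R J} => J.1) ⟨J, hJ⟩) ▸ hJ

end GVTorsion

section Ideal

open RingTheory.Sequence

variable {R : Type*} [CommRing R]

-- Choose `a` in `I` and in all members of `S` missing `x`, but in none of those containing `x`.
theorem exists_mem_forall_add_notMem_of_isAntichain {S : Set (Ideal R)} (hS : S.Finite)
    (hS_prime : ∀ p ∈ S, p.IsPrime) (hS_anti : IsAntichain (· ≤ ·) S) {x : R} {I : Ideal R}
    (hxI : ∀ p ∈ S, ¬ Ideal.span {x} ⊔ I ≤ p) : ∃ a ∈ I, ∀ p ∈ S, x + a ∉ p := by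
  classical
  let A := {p ∈ S | x ∈ p}
  let B := {p ∈ S | x ∉ p}
  have hB : B.Finite := hS.subset (Set.sep_subset _ _)
  have avoid : ¬ ((I ⊓ hB.toFinset.inf id : Ideal R) : Set R) ⊆ ⋃ p ∈ A, (p : Set R) := by
    rw [Ideal.subset_union_prime_finite (hS.subset (Set.sep_subset _ _)) ⊥ ⊥
      fun p hp _ _ => hS_prime p hp.1]
    rintro ⟨p, ⟨hpS, hxp⟩, hle⟩
    have hp := hS_prime p hpS
    rcases hp.inf_le.1 hle with hIp | hBp
    · exact hxI p hpS (sup_le ((Ideal.span_singleton_le_iff_mem p).2 hxp) hIp)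
    · obtain ⟨q, hq, hqp⟩ := hp.inf_le'.1 hBp
      obtain ⟨hqS, hxq⟩ := hB.mem_toFinset.1 hq
      exact hxq (hS_anti.eq hqS hpS hqp ▸ hxp)
  obtain ⟨a, ⟨haI, haB⟩, haA⟩ := Set.not_subset.1 avoid
  refine ⟨a, haI, fun p hpS hxa => ?_⟩
  by_cases hxp : x ∈ p
  · exact haA (Set.mem_biUnion (⟨hpS, hxp⟩ : p ∈ A) ((p.add_mem_iff_right hxp).1 hxa))
  · have hap : a ∈ p := Finset.inf_le (f := id) (hB.mem_toFinset.2 ⟨hpS, hxp⟩) haB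
    exact hxp ((p.add_mem_iff_left hap).1 hxa)

theorem span_singleton_add_sup_of_mem {x a : R} {I : Ideal R} (ha : a ∈ I) :
    Ideal.span {x + a} ⊔ I = Ideal.span {x} ⊔ I := by
  rw [← sup_eq_right.2 ((Ideal.span_singleton_le_iff_mem I).2 ha), ← sup_assoc, ← sup_assoc,
    ← Ideal.span_insert, ← Ideal.span_insert, Ideal.span_pair_add_right]

theorem exists_span_singleton_sup_eq_spanFinrank_lt {M : Type*} [AddCommGroup M] [Module R M]
    {N : Submodule R M} (hN : N.FG) (hN₀ : N ≠ ⊥) :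
    ∃ (x : M) (N' : Submodule R M),
      R ∙ x ⊔ N' = N ∧ N'.spanFinrank < N.spanFinrank := by
  classical
  obtain ⟨s, hs_card, rfl⟩ := hN.exists_span_finset_card_eq_spanFinrank
  obtain ⟨x, hx⟩ : s.Nonempty := by
    rw [Finset.nonempty_iff_ne_empty]
    rintro rfl
    exact hN₀ (by simp)
  refine ⟨x, Submodule.span R (s.erase x), ?_, ?_⟩
  · rw [← Submodule.span_insert, ← Finset.coe_insert, Finset.insert_erase hx]
  · calc (Submodule.span R (s.erase x : Set M)).spanFinrank
        ≤ (s.erase x).card :=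
          (Submodule.spanFinrank_span_le_ncard_of_finite (s.erase x).finite_toSet).trans_eq
            (Set.ncard_coe_finset _)
      _ < s.card := Finset.card_erase_lt_of_mem hx
      _ = (Submodule.span R (s : Set M)).spanFinrank := hs_card

theorem isDomain_of_isPrime_span_singleton [IsNoetherianRing R] {x : R}
    (hx : x ∈ (⊥ : Ideal R).jacobson) (hx_min : ∀ q ∈ minimalPrimes R, x ∉ q)
    (hx_prime : (Ideal.span {x}).IsPrime) : IsDomain R := by
  obtain ⟨q, hq, hqx⟩ := Ideal.exists_minimalPrimes_le (bot_le : ⊥ ≤ Ideal.span {x})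
  have hq_prime : q.IsPrime := hq.1.1
  have hq_le : q ≤ Ideal.span {x} • q := fun a ha => by
    obtain ⟨b, rfl⟩ := Ideal.mem_span_singleton.1 (hqx ha)
    exact Submodule.smul_mem_smul (Ideal.mem_span_singleton_self x)
      ((hq_prime.mem_or_mem ha).resolve_left (hx_min q hq))
  obtain rfl : q = ⊥ := Submodule.eq_bot_of_le_smul_of_le_jacobson_bot _ q
    (IsNoetherian.noetherian q) hq_le ((Ideal.span_singleton_le_iff_mem _).2 hx)
  exact IsDomain.of_bot_isPrime R

theorem isWeaklyRegular_pair_of_prime [IsDomain R] {x y : R} (hx : Prime x) (hxy : ¬ x ∣ y) :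
    IsWeaklyRegular R [x, y] := by
  refine .cons (.of_ne_zero hx.ne_zero) (.cons ?_ (.nil R _))
  refine (isSMulRegular_quotient_iff_mem_of_smul_mem _ y).2 fun r hr => ?_
  simp only [← Submodule.ideal_span_singleton_smul, smul_eq_mul, Ideal.mul_top,
    Ideal.mem_span_singleton] at hr ⊢
  exact (hx.dvd_or_dvd hr).resolve_left hxy

end Ideal

section LocalRing

open IsLocalRing

variable {R : Type*} [CommRing R] [IsLocalRing R]

theorem isRegularLocalRing_of_span_eq_maximalIdeal [IsNoetherianRing R] {s : Set R}
    (hs : Ideal.span s = maximalIdeal R) (hs_card : s.encard ≤ ringKrullDim R) :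
    IsRegularLocalRing R := by
  refine .of_spanFinrank_maximalIdeal_le R (le_trans ?_ hs_card)
  rw [← hs]
  exact_mod_cast Submodule.spanFinrank_span_le_encard s

theorem isRegularLocalRing_of_span_pair_eq_maximalIdeal [IsNoetherianRing R] {x y : R}
    (hxy : Ideal.span {x, y} = maximalIdeal R) (h : 2 ≤ ringKrullDim R) :
    IsRegularLocalRing R := by
  have hcard : ({x, y} : Set R).encard ≤ 2 :=
    (Set.encard_insert_le {y} x).trans_eq (by rw [Set.encard_singleton, one_add_one_eq_two])
  exact isRegularLocalRing_of_span_eq_maximalIdeal hxy ((WithBot.coe_le_coe.2 hcard).trans h)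

theorem isLocalRing_quotient_span_singleton {x : R} (hx : x ∈ maximalIdeal R) :
    IsLocalRing (R ⧸ Ideal.span {x}) :=
  have : Nontrivial (R ⧸ Ideal.span {x}) := Ideal.Quotient.nontrivial_iff.2
    (ne_top_of_le_ne_top (maximalIdeal.isMaximal R).ne_top
      ((Ideal.span_singleton_le_iff_mem _).2 hx))
  .of_surjective' _ Ideal.Quotient.mk_surjective

theorem spanFinrank_maximalIdeal_quotient_le [IsNoetherianRing R] {x : R} {I : Ideal R}
    [IsLocalRing (R ⧸ Ideal.span {x})] (hxI : Ideal.span {x} ⊔ I = maximalIdeal R) :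
    (maximalIdeal (R ⧸ Ideal.span {x})).spanFinrank ≤ I.spanFinrank := by
  have : I.map (Ideal.Quotient.mk (Ideal.span {x})) = maximalIdeal (R ⧸ Ideal.span {x}) := by
    rw [← map_maximalIdeal_of_surjective _ Ideal.Quotient.mk_surjective, ← hxI, Ideal.map_sup,
      Ideal.map_quotient_self, bot_sup_eq]
  rw [← this]
  exact Ideal.spanFinrank_map_le_of_fg _ (IsNoetherian.noetherian I)

end LocalRing

section RegularLocalRing

open IsLocalRing RingTheory.Sequence

variable {R : Type*} [CommRing R] [IsRegularLocalRing R]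

theorem isRegularLocalRing_quotient_span_singleton {x : R} (hx : x ∈ maximalIdeal R)
    [IsLocalRing (R ⧸ Ideal.span {x})]
    (h : (maximalIdeal (R ⧸ Ideal.span {x})).spanFinrank < (maximalIdeal R).spanFinrank) :
    IsRegularLocalRing (R ⧸ Ideal.span {x}) := by
  refine .of_spanFinrank_maximalIdeal_le _ (ENat.WithBot.add_le_add_one_right_iff.1 ?_)
  calc ((maximalIdeal (R ⧸ Ideal.span {x})).spanFinrank : WithBot ℕ∞) + 1
      ≤ (maximalIdeal R).spanFinrank := by exact_mod_cast h
    _ = ringKrullDim R := IsRegularLocalRing.spanFinrank_maximalIdeal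
    _ ≤ ringKrullDim (R ⧸ Ideal.span {x}) + 1 := by
      simpa using ringKrullDim_le_ringKrullDim_quotient_add_encard {x}
        (by simpa [IsLocalRing.ringJacobson_eq_maximalIdeal] using hx)

theorem maximalIdeal_notMem_minimalPrimes (h : maximalIdeal R ≠ ⊥) :
    maximalIdeal R ∉ minimalPrimes R := by
  rw [← Ideal.height_eq_zero_iff]
  intro hm
  have hrank : (maximalIdeal R).spanFinrank = 0 := by
    have := IsRegularLocalRing.spanFinrank_maximalIdeal (R := R)
    rw [← maximalIdeal_height_eq_ringKrullDim, hm] at this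
    exact_mod_cast this
  exact h ((Submodule.spanFinrank_eq_zero_iff_eq_bot (IsNoetherian.noetherian _)).1 hrank)

theorem exists_mem_maximalIdeal_isRegularLocalRing_quotient (h : maximalIdeal R ≠ ⊥) :
    ∃ x ∈ maximalIdeal R, (∀ q ∈ minimalPrimes R, x ∉ q) ∧
      ∃ _ : IsRegularLocalRing (R ⧸ Ideal.span {x}),
        (maximalIdeal (R ⧸ Ideal.span {x})).spanFinrank < (maximalIdeal R).spanFinrank := by
  obtain ⟨x, I, hxI, hI⟩ :=
    exists_span_singleton_sup_eq_spanFinrank_lt (IsNoetherian.noetherian (maximalIdeal R)) h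
  have not_le (q) (hq : q ∈ minimalPrimes R) : ¬ maximalIdeal R ≤ q := fun hle =>
    maximalIdeal_notMem_minimalPrimes h
      ((maximalIdeal.isMaximal R).eq_of_le hq.1.1.ne_top hle ▸ hq)
  obtain ⟨a, haI, ha⟩ := exists_mem_forall_add_notMem_of_isAntichain
    (minimalPrimes.finite_of_isNoetherianRing R) (fun q hq => hq.1.1)
    (setOfPred_minimal_antichain _) (hxI ▸ not_le)
  have hxaI : Ideal.span {x + a} ⊔ I = maximalIdeal R :=
    (span_singleton_add_sup_of_mem haI).trans hxI
  have hxa : x + a ∈ maximalIdeal R :=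
    hxaI ▸ Ideal.mem_sup_left (Ideal.mem_span_singleton_self _)
  have := isLocalRing_quotient_span_singleton hxa
  have hlt := (spanFinrank_maximalIdeal_quotient_le hxaI).trans_lt hI
  exact ⟨x + a, hxa, ha, isRegularLocalRing_quotient_span_singleton hxa hlt, hlt⟩

theorem isDomain_of_isRegularLocalRing (A : Type*) [CommRing A] [IsRegularLocalRing A] :
    IsDomain A := by
  by_cases h : maximalIdeal A = ⊥
  · exact (isField_iff_maximalIdeal_eq.2 h).isDomain
  · obtain ⟨x, hx, hx_min, _, hlt⟩ := exists_mem_maximalIdeal_isRegularLocalRing_quotient h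
    have := isDomain_of_isRegularLocalRing (A ⧸ Ideal.span {x})
    exact isDomain_of_isPrime_span_singleton (by rwa [jacobson_eq_maximalIdeal _ bot_ne_top])
      hx_min ((Ideal.Quotient.isDomain_iff_prime _).1 this)
termination_by (maximalIdeal A).spanFinrank
decreasing_by exact hlt

theorem exists_prime_mem_maximalIdeal (h : maximalIdeal R ≠ ⊥) :
    ∃ x ∈ maximalIdeal R, Prime x := by
  have := isDomain_of_isRegularLocalRing R
  obtain ⟨x, hx, hx_min, _, -⟩ := exists_mem_maximalIdeal_isRegularLocalRing_quotient h
  have hx₀ : x ≠ 0 := by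
    rintro rfl
    exact hx_min ⊥ (by simp [IsDomain.minimalPrimes_eq_singleton_bot]) (zero_mem _)
  refine ⟨x, hx, (Ideal.span_singleton_prime hx₀).1 ?_⟩
  exact (Ideal.Quotient.isDomain_iff_prime _).1 (isDomain_of_isRegularLocalRing _)

theorem exists_isWeaklyRegular_pair (h : 2 ≤ ringKrullDim R) :
    ∃ x ∈ maximalIdeal R, ∃ y ∈ maximalIdeal R, IsWeaklyRegular R [x, y] := by
  have := isDomain_of_isRegularLocalRing R
  have ne_span (x : R) : maximalIdeal R ≠ Ideal.span {x} := by
    intro hm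
    have hrank : 2 ≤ (maximalIdeal R).spanFinrank := by
      exact_mod_cast h.trans (ringKrullDim_le_spanFinrank_maximalIdeal R)
    have hrank' := Submodule.spanFinrank_span_le_ncard_of_finite (R := R) (Set.finite_singleton x)
    rw [Set.ncard_singleton, Ideal.submodule_span_eq, ← hm] at hrank'
    omega
  obtain ⟨x, hx, hx_prime⟩ := exists_prime_mem_maximalIdeal (R := R)
    (by simpa using ne_span 0)
  obtain ⟨y, hy, hxy⟩ := SetLike.exists_of_lt
    (((Ideal.span_singleton_le_iff_mem _).2 hx).lt_of_ne (ne_span x).symm)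
  exact ⟨x, hx, y, hy,
    isWeaklyRegular_pair_of_prime hx_prime (mt Ideal.mem_span_singleton.2 hxy)⟩

theorem isGVIdeal_maximalIdeal (h : 2 ≤ ringKrullDim R) : IsGVIdeal R (maximalIdeal R) := by
  obtain ⟨x, hx, y, hy, hxy⟩ := exists_isWeaklyRegular_pair h
  exact isGVIdeal_of_isWeaklyRegular (IsNoetherian.noetherian _) hx hy hxy

end RegularLocalRing

theorem stmt11_general {R : Type u} [CommRing R] [Nontrivial R] {I : Ideal R}
    (hI : IsGVIdeal R I) (hI_pow : ⨅ n : ℕ, I ^ n = ⊥) :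
    IsGVTorsion R (DirectSum {J : Ideal R // IsGVIdeal R J} fun J => R ⧸ J.1) ∧
    IsWProjective R (DirectSum {J : Ideal R // IsGVIdeal R J} fun J => R ⧸ J.1) ∧
    ¬ IsWSplitModule R (DirectSum {J : Ideal R // IsGVIdeal R J} fun J => R ⧸ J.1) := by
  refine ⟨isGVTorsion_directSum_quotient, isGVTorsion_directSum_quotient.isWProjective, ?_⟩
  rw [isWSplitModule_directSum_quotient_iff]
  refine fun hGV => hGV.ne_bot (le_bot_iff.1 (hI_pow ▸ le_iInf fun n => ?_))
  exact iInf_le (fun J : {J // IsGVIdeal R J} => J.1) ⟨I ^ n, hI.pow n⟩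

/-- Over a 2-dimensional regular local ring `R`, the module `M = ⊕_{J GV-ideal} R/J` is
GV-torsion (hence w-projective) but not w-split. -/
theorem stmt11 {R : Type u} [CommRing R] [IsNoetherianRing R] [IsLocalRing R]
    (hdim : ringKrullDim R = 2)
    (hreg : ∃ x y : R, IsLocalRing.maximalIdeal R = Ideal.span {x, y}) :
    IsGVTorsion R (DirectSum {J : Ideal R // IsGVIdeal R J} fun J => R ⧸ J.1) ∧
    IsWProjective R (DirectSum {J : Ideal R // IsGVIdeal R J} fun J => R ⧸ J.1) ∧
    ¬ IsWSplitModule R (DirectSum {J : Ideal R // IsGVIdeal R J} fun J => R ⧸ J.1) := by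
  obtain ⟨x, y, hm⟩ := hreg
  have := isRegularLocalRing_of_span_pair_eq_maximalIdeal hm.symm hdim.ge
  exact stmt11_general (isGVIdeal_maximalIdeal hdim.ge)
    (Ideal.iInf_pow_eq_bot_of_isLocalRing _ (IsLocalRing.maximalIdeal.isMaximal R).ne_top)
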